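/- The triple (S_1^<(ω;ω), ≤, r) (Milliken's space) is a topological Ramsey space. -/

import Mathlib

open Topology

section Ellentuck

variable {R α : Type*}

/-- The basic set `[a,A] = {B ∈ R : B ≤ A and r_n(B) = a for some n}` of the
Ellentuck topology determined by a quasi-order `le` and approximation
mappings `r`. -/
def EllSet (le : R → R → Prop) (r : ℕ → R → α) (a : α) (A : R) : Set R :=
  {B | le B A ∧ ∃ n, r n B = a}

/-- The Ellentuck topology on `R`, generated by the basic sets `[a,A]`. -/
def EllTop (le : R → R → Prop) (r : ℕ → R → α) : TopologicalSpace R :=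
  TopologicalSpace.generateFrom {s | ∃ a A, s = EllSet le r a A}

/-- A set `S ⊆ R` is Ramsey: for every nonempty `[a,A]` there is `B ∈ [a,A]`
with `[a,B] ⊆ S` or `[a,B] ∩ S = ∅`. -/
def IsRamseySet (le : R → R → Prop) (r : ℕ → R → α) (S : Set R) : Prop :=
  ∀ (a : α) (A : R), (EllSet le r a A).Nonempty →
    ∃ B ∈ EllSet le r a A, EllSet le r a B ⊆ S ∨ EllSet le r a B ∩ S = ∅

/-- A set `S ⊆ R` is Ramsey null: for every nonempty `[a,A]` there is
`B ∈ [a,A]` with `[a,B] ∩ S = ∅`. -/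
def IsRamseyNullSet (le : R → R → Prop) (r : ℕ → R → α) (S : Set R) : Prop :=
  ∀ (a : α) (A : R), (EllSet le r a A).Nonempty →
    ∃ B ∈ EllSet le r a A, EllSet le r a B ∩ S = ∅

/-- A set has the property of Baire with respect to a topology `t`: it is the
symmetric difference of a `t`-open set and a `t`-meager set. -/
def HasPropertyOfBaire (t : TopologicalSpace R) (S : Set R) : Prop :=
  ∃ U M : Set R, IsOpen[t] U ∧ @IsMeagre R t M ∧ S = symmDiff U M

/-- `(R, ≤, r)` is a topological Ramsey space: every subset of `R` with the
property of Baire in the Ellentuck topology is Ramsey, and every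
Ellentuck-meager subset is Ramsey null. -/
def IsTopRamseySpace (le : R → R → Prop) (r : ℕ → R → α) : Prop :=
  (∀ S : Set R, HasPropertyOfBaire (EllTop le r) S → IsRamseySet le r S) ∧
  (∀ S : Set R, @IsMeagre R (EllTop le r) S → IsRamseyNullSet le r S)

end Ellentuck

/-- The space `S_t(ω;ω)` of parameter words: surjections `A : t+ω → t+ω`
which are the identity below `t` and whose classes are ordered by their
minima (`min A^{-1}({j}) < min A^{-1}({j'})` for `j < j'`). -/
def St (t : ℕ) : Set (ℕ → ℕ) :=
  {A | (∀ j, ∃ i, A i = j) ∧ (∀ i < t, A i = i) ∧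
       ∀ j j', j < j' → ∃ i, A i = j ∧ ∀ i', A i' = j' → i < i'}

/-- The space `S_t(ω;k)`: surjections `A : t+ω → t+k` which are the identity
below `t` and whose classes are ordered by their minima. -/
def StK (t k : ℕ) : Set (ℕ → ℕ) :=
  {A | (∀ i, A i < t + k) ∧ (∀ j < t + k, ∃ i, A i = j) ∧ (∀ i < t, A i = i) ∧
       ∀ j j', j < j' → j' < t + k → ∃ i, A i = j ∧ ∀ i', A i' = j' → i < i'}

/-- The composition `(A·B)(i) = B(A(i))`. -/
def compP (A B : ℕ → ℕ) : ℕ → ℕ := fun i => B (A i)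

/-- The approximation map: `r(0,A) = ∅` and, for `n > 0`, `r(n,A)` is the
restriction of `A` to the initial segment `{0, …, min A^{-1}({t+n}) − 1}`. -/
noncomputable def rP (t : ℕ) (n : ℕ) (A : ℕ → ℕ) : List ℕ :=
  if n = 0 then [] else List.ofFn fun i : Fin (sInf {i | A i = t + n}) => A i

/-- The space `S_t^<(ω;ω)` of ascending parameter words: elements of
`S_t(ω;ω)` whose classes `A^{-1}({t+j})` are finite and occur in successive
blocks (`max A^{-1}({t+i}) < min A^{-1}({t+j})` for `i < j`). -/
def StLt (t : ℕ) : Set (ℕ → ℕ) :=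
  {A | A ∈ St t ∧ (∀ j, {i | A i = t + j}.Finite) ∧
       ∀ j j', j < j' → ∀ i i', A i = t + j → A i' = t + j' → i < i'}

/-- The space `S_t^<(ω;k)`: elements of `S_t(ω;k)` whose classes
`A^{-1}({t+j})`, `j < k`, are finite and occur in successive blocks. -/
def StLtK (t k : ℕ) : Set (ℕ → ℕ) :=
  {A | A ∈ StK t k ∧ (∀ j < k, {i | A i = t + j}.Finite) ∧
       ∀ j j', j < j' → j' < k → ∀ i i', A i = t + j → A i' = t + j' → i < i'}

/-!
By the abstract Ellentuck theorem it suffices to verify Todorcevic's axioms A.1 to A.4: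
combinatorial forcing then shows that Ellentuck-open sets are Ramsey, and fusion shows that
countable unions of Ramsey null sets are Ramsey null.

For A.1 to A.3, note that `A ≤ B` says exactly that `A` is constant on the classes of `B`, and that
an approximation of an ascending word stops just before the first occurrence of a letter. At a
common such position `L` two ascending words can be spliced: follow the first below `L` and the
second, with its letters shifted, from `L` on.

The pigeonhole A.4 for `t = 1` is Hindman's theorem for finite unions in disguise. Writing the
members of a neighbourhood of `D` as `ρ ∘ D`, the `(n + 1)`-st approximation of `ρ` is given by the
finite set on which `ρ` takes its one new letter and by the position where the next letter starts.
An idempotent ultrafilter of finite sets provides blocks `F 0 < F 1 < ⋯` such that the colour of the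
pair (a union of blocks with index below `j`, `min (F j)`) is constant, and the word whose letters
are carried by these blocks does the job.
-/

section AbstractEllentuck

variable {R α : Type*} {le : R → R → Prop} {leFin : α → α → Prop} {r : ℕ → R → α}

/-- The axioms A.1 (sequencing), A.2 (finitization) and A.3 (amalgamation) of Todorcevic's theory
of Ramsey spaces, together with the closedness of `R` in the space of sequences of approximations.
`leFin` is the finitization `≤_fin` of `le`; the depth of `a` in `B` is the least `n` with
`leFin a (r n B)`. -/
structure IsApproximationSpace (le : R → R → Prop) (leFin : α → α → Prop) (r : ℕ → R → α) :
    Prop where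
  le_refl : ∀ A, le A A
  le_trans : ∀ {A B C}, le A B → le B C → le A C
  index_eq : ∀ {m n A B}, r m A = r n B → m = n
  approx_eq_of_le : ∀ {m n A B}, m ≤ n → r n A = r n B → r m A = r m B
  finite_leFin : ∀ b, {a | leFin a b}.Finite
  le_iff : ∀ {A B}, le A B ↔ ∀ n, ∃ m, leFin (r n A) (r m B)
  leFin_initial : ∀ {k m n A B}, k ≤ n → leFin (r n A) (r m B) → ∃ l ≤ m, leFin (r k A) (r l B)
  nonempty_of_depth : ∀ {a A B d}, IsLeast {n | leFin a (r n B)} d →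
    A ∈ EllSet le r (r d B) B → (EllSet le r a A).Nonempty
  exists_amalgam : ∀ {a A B d}, IsLeast {n | leFin a (r n B)} d → le A B →
    (EllSet le r a A).Nonempty → ∃ A' ∈ EllSet le r (r d B) B, EllSet le r a A' ⊆ EllSet le r a A
  exists_limit : ∀ A : ℕ → R, (∀ n, r n (A (n + 1)) = r n (A n)) → ∃ B, ∀ n, r n B = r n (A n)

/-- The pigeonhole axiom A.4 of Todorcevic's theory. In the presence of A.3 it does not matter
whether the monochromatic `B` is sought in `[a, D]`, as here, or in `[depth_D(a), D]`. -/
def HasPigeonhole (le : R → R → Prop) (r : ℕ → R → α) : Prop :=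
  ∀ (n : ℕ) (D : R) (O : Set α), ∃ B ∈ EllSet le r (r n D) D,
    (∀ C ∈ EllSet le r (r n D) B, r (n + 1) C ∈ O) ∨
      ∀ C ∈ EllSet le r (r n D) B, r (n + 1) C ∉ O

namespace IsApproximationSpace

variable (h : IsApproximationSpace le leFin r)
include h

theorem self_mem_ellSet (n : ℕ) (A : R) : A ∈ EllSet le r (r n A) A :=
  ⟨h.le_refl A, n, rfl⟩

theorem ellSet_mono {a : α} {A B : R} (hBA : le B A) : EllSet le r a B ⊆ EllSet le r a A :=
  fun _ hC => ⟨h.le_trans hC.1 hBA, hC.2⟩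

theorem mem_ellSet_iff {n : ℕ} {A C D : R} :
    C ∈ EllSet le r (r n D) A ↔ le C A ∧ r n C = r n D := by
  refine and_congr_right fun _ => ⟨?_, fun hC => ⟨n, hC⟩⟩
  rintro ⟨m, hm⟩
  obtain rfl := h.index_eq hm
  exact hm

theorem ellSet_approx_anti {m n : ℕ} (hmn : m ≤ n) (A C : R) :
    EllSet le r (r n C) A ⊆ EllSet le r (r m C) A := fun D hD => by
  rw [h.mem_ellSet_iff] at hD ⊢
  exact ⟨hD.1, h.approx_eq_of_le hmn hD.2⟩

theorem exists_depth {a : α} {A : R} (hA : (EllSet le r a A).Nonempty) :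
    ∃ d, IsLeast {n | leFin a (r n A)} d := by
  obtain ⟨C, hCA, n, rfl⟩ := hA
  exact ⟨_, isLeast_csInf (h.le_iff.1 hCA n)⟩

theorem depth_le_depth {m n d e : ℕ} {A C : R} (hmn : m ≤ n)
    (hd : IsLeast {k | leFin (r m C) (r k A)} d) (he : IsLeast {k | leFin (r n C) (r k A)} e) :
    d ≤ e := by
  obtain ⟨l, hle, hl⟩ := h.leFin_initial hmn he.1
  exact (hd.2 hl).trans hle

theorem isLeast_depth_congr {a : α} {A B : R} {d : ℕ} (hAB : r d A = r d B) :
    IsLeast {n | leFin a (r n A)} d ↔ IsLeast {n | leFin a (r n B)} d := by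
  suffices ∀ {A B}, r d A = r d B → IsLeast {n | leFin a (r n A)} d →
      IsLeast {n | leFin a (r n B)} d from ⟨this hAB, this hAB.symm⟩
  intro A B hAB ⟨hd, hmin⟩
  refine ⟨by simpa only [Set.mem_ofPred_eq, hAB] using hd, fun n hn => ?_⟩
  by_contra! hlt
  refine hlt.not_ge (hmin ?_)
  simpa only [Set.mem_ofPred_eq, h.approx_eq_of_le hlt.le hAB] using hn

theorem exists_fusion_limit {A : ℕ → R} (hA : ∀ n, A (n + 1) ∈ EllSet le r (r n (A n)) (A n)) :
    ∃ B, ∀ n, B ∈ EllSet le r (r n (A n)) (A n) := by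
  simp only [h.mem_ellSet_iff] at hA ⊢
  have hle : ∀ {m n}, m ≤ n → le (A n) (A m) := fun {m n} hmn => by
    induction n, hmn using Nat.le_induction with
    | base => exact h.le_refl _
    | succ n _ ih => exact h.le_trans (hA n).1 ih
  have heq : ∀ {m n}, m ≤ n → r m (A n) = r m (A m) := fun {m n} hmn => by
    induction n, hmn using Nat.le_induction with
    | base => rfl
    | succ n hmn ih => exact (h.approx_eq_of_le hmn (hA n).2).trans ih
  obtain ⟨B, hB⟩ := h.exists_limit A fun n => (hA n).2
  refine ⟨B, fun n => ⟨h.le_iff.2 fun k => ?_, hB n⟩⟩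
  rw [hB k, ← heq (le_max_left k n)]
  exact h.le_iff.1 (hle (le_max_right k n)) k

section Fusion

variable {P : α → R → Prop}
  (hmono : ∀ {a A B}, EllSet le r a B ⊆ EllSet le r a A → P a A → P a B)
  (hdense : ∀ {a A}, (EllSet le r a A).Nonempty → ∃ B ∈ EllSet le r a A, P a B)
include hmono hdense

theorem exists_forall_depth_eq (d : ℕ) (A : R) :
    ∃ B ∈ EllSet le r (r d A) A, ∀ a, IsLeast {n | leFin a (r n B)} d → P a B := by
  suffices hT : ∀ T : Set α, T.Finite →
      ∃ B ∈ EllSet le r (r d A) A, ∀ a ∈ T, IsLeast {n | leFin a (r n B)} d → P a B by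
    obtain ⟨B, hB, hBP⟩ := hT _ (h.finite_leFin (r d A))
    refine ⟨B, hB, fun a ha => hBP a ?_ ha⟩
    rw [Set.mem_ofPred_eq, ← (h.mem_ellSet_iff.1 hB).2]
    exact ha.1
  intro T hT
  induction T, hT using Set.Finite.induction_on with
  | empty => exact ⟨A, h.self_mem_ellSet d A, by simp⟩
  | @insert a T _ _ ih =>
    obtain ⟨B, hB, hBP⟩ := ih
    by_cases ha : IsLeast {n | leFin a (r n B)} d
    · obtain ⟨C, hC, hCP⟩ := hdense (h.nonempty_of_depth ha (h.self_mem_ellSet d B))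
      obtain ⟨B', hB', hsub⟩ := h.exists_amalgam ha hC.1 ⟨C, h.le_refl C, hC.2⟩
      rw [h.mem_ellSet_iff] at hB hB'
      refine ⟨B', h.mem_ellSet_iff.2 ⟨h.le_trans hB'.1 hB.1, hB'.2.trans hB.2⟩, ?_⟩
      rintro b (rfl | hb) hbd
      · exact hmono hsub hCP
      · exact hmono (h.ellSet_mono hB'.1) (hBP b hb ((h.isLeast_depth_congr hB'.2).1 hbd))
    · refine ⟨B, hB, ?_⟩
      rintro b (rfl | hb) hbd
      · exact absurd hbd ha
      · exact hBP b hb hbd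

theorem exists_forall_depth_ge (d : ℕ) (A : R) :
    ∃ B ∈ EllSet le r (r d A) A, ∀ a, ∀ e ≥ d, IsLeast {n | leFin a (r n B)} e → P a B := by
  choose F hF hFP using h.exists_forall_depth_eq hmono hdense
  let s : ℕ → R := fun n => Nat.rec A (fun n B => F (max d n) B) n
  have hs : ∀ n, s (n + 1) ∈ EllSet le r (r (max d n) (s n)) (s n) := fun n => hF _ _
  obtain ⟨B, hB⟩ := h.exists_fusion_limit fun n =>
    h.ellSet_approx_anti (le_max_right d n) _ _ (hs n)
  simp only [h.mem_ellSet_iff] at hs hB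
  have hsd : ∀ n, r d (s n) = r d A := fun n => by
    induction n with
    | zero => rfl
    | succ n ih => exact (h.approx_eq_of_le (le_max_left d n) (hs n).2).trans ih
  refine ⟨B, h.mem_ellSet_iff.2 ⟨(hB 0).1, (hB d).2.trans (hsd d)⟩, fun a e he ha => ?_⟩
  have hse : s (e + 1) = F e (s e) := congrArg (F · (s e)) (max_eq_right he)
  have heq : r e B = r e (s (e + 1)) := h.approx_eq_of_le e.le_succ (hB (e + 1)).2
  refine hmono (h.ellSet_mono (hB (e + 1)).1) ?_
  rw [hse] at heq ⊢
  exact hFP e (s e) a ((h.isLeast_depth_congr heq).1 ha)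

theorem exists_forall_extension {a : α} {A : R} (hA : (EllSet le r a A).Nonempty) :
    ∃ B ∈ EllSet le r a A, ∀ C ∈ EllSet le r a B, ∀ m n, r m C = a → m ≤ n → P (r n C) B := by
  obtain ⟨d, hd⟩ := h.exists_depth hA
  obtain ⟨B₀, hB₀, hP⟩ := h.exists_forall_depth_ge hmono hdense d A
  obtain ⟨B, hB⟩ := h.nonempty_of_depth hd hB₀
  rw [h.mem_ellSet_iff] at hB₀
  refine ⟨B, h.ellSet_mono hB₀.1 hB, ?_⟩
  rintro C hC m n rfl hmn
  obtain ⟨e, he⟩ := h.exists_depth ⟨C, h.le_trans hC.1 hB.1, n, rfl⟩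
  have hde := h.depth_le_depth hmn ((h.isLeast_depth_congr hB₀.2).2 hd) he
  exact hmono (h.ellSet_mono hB.1) (hP _ e hde he)

end Fusion

theorem exists_ellSet_subset_of_isOpen {U : Set R} (hU : IsOpen[EllTop le r] U) {C : R}
    (hC : C ∈ U) : ∃ n, EllSet le r (r n C) C ⊆ U := by
  induction hU with
  | basic s hs =>
    obtain ⟨a, A, rfl⟩ := hs
    obtain ⟨hCA, n, rfl⟩ := hC
    exact ⟨n, h.ellSet_mono hCA⟩
  | univ => exact ⟨0, Set.subset_univ _⟩
  | inter s t _ _ hs ht =>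
    obtain ⟨m, hm⟩ := hs hC.1
    obtain ⟨n, hn⟩ := ht hC.2
    exact ⟨max m n, Set.subset_inter ((h.ellSet_approx_anti (le_max_left m n) C C).trans hm)
      ((h.ellSet_approx_anti (le_max_right m n) C C).trans hn)⟩
  | sUnion S _ ih =>
    obtain ⟨s, hs, hCs⟩ := hC
    obtain ⟨n, hn⟩ := ih s hs hCs
    exact ⟨n, hn.trans (Set.subset_sUnion_of_mem hs)⟩

end IsApproximationSpace

/-- `A` rejects `a` with respect to `X` (in the terminology of Galvin and Prikry): no `B ∈ [a, A]`
accepts `a`, that is, satisfies `[a, B] ⊆ X`. -/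
def Rejects (le : R → R → Prop) (r : ℕ → R → α) (X : Set R) (a : α) (A : R) : Prop :=
  ∀ B ∈ EllSet le r a A, ¬EllSet le r a B ⊆ X

theorem Rejects.mono {X : Set R} {a : α} {A B : R} (hBA : EllSet le r a B ⊆ EllSet le r a A)
    (hA : Rejects le r X a A) : Rejects le r X a B :=
  fun C hC => hA C (hBA hC)

namespace IsApproximationSpace

variable (h : IsApproximationSpace le leFin r)
include h

theorem exists_subset_or_rejects (X : Set R) {a : α} {A : R} (hA : (EllSet le r a A).Nonempty) :
    ∃ B ∈ EllSet le r a A, EllSet le r a B ⊆ X ∨ Rejects le r X a B := by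
  by_cases hr : Rejects le r X a A
  · obtain ⟨B, hB⟩ := hA
    exact ⟨B, hB, Or.inr (hr.mono (h.ellSet_mono hB.1))⟩
  · simp only [Rejects, not_forall, not_not] at hr
    obtain ⟨B, hB, hBX⟩ := hr
    exact ⟨B, hB, Or.inl hBX⟩

theorem exists_subset_or_rejects_succ (hp : HasPigeonhole le r) (X : Set R) {a : α} {A : R}
    (hA : (EllSet le r a A).Nonempty) :
    ∃ B ∈ EllSet le r a A, EllSet le r a B ⊆ X ∨
      ∀ C ∈ EllSet le r a B, ∀ n, r n C = a → Rejects le r X (r (n + 1) C) B := by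
  obtain ⟨B, hB, hdec⟩ := h.exists_forall_extension
    (P := fun a A => EllSet le r a A ⊆ X ∨ Rejects le r X a A)
    (fun hsub => Or.imp hsub.trans (Rejects.mono hsub)) (h.exists_subset_or_rejects X) hA
  obtain ⟨n, rfl⟩ := hB.2
  obtain ⟨B', hB', hmono⟩ := hp n B {b | EllSet le r b B ⊆ X}
  have hsub : ∀ b, EllSet le r b B' ⊆ EllSet le r b B := fun b => h.ellSet_mono hB'.1
  refine ⟨B', h.ellSet_mono hB.1 hB', hmono.imp (fun hacc C hC => ?_) fun hrej C hC m hm => ?_⟩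
  · exact hacc C hC (h.ellSet_mono (hsub _ hC).1 (h.self_mem_ellSet (n + 1) C))
  · obtain rfl := h.index_eq hm
    exact ((hdec C (hsub _ hC) m _ hm m.le_succ).resolve_left (hrej C hC)).mono (hsub _)

/-- The combinatorial forcing argument of Galvin and Prikry. -/
theorem isRamseySet_of_isOpen (hp : HasPigeonhole le r) {X : Set R}
    (hX : IsOpen[EllTop le r] X) : IsRamseySet le r X := by
  intro a A hA
  let P (a : α) (A : R) : Prop := EllSet le r a A ⊆ X ∨
    ∀ C ∈ EllSet le r a A, ∀ n, r n C = a → Rejects le r X (r (n + 1) C) A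
  have hmono : ∀ {a A B}, EllSet le r a B ⊆ EllSet le r a A → P a A → P a B := by
    intro a A B hsub
    refine Or.imp hsub.trans ?_
    rintro hA C hC n rfl
    exact (hA C (hsub hC) n rfl).mono fun D hD =>
      ⟨(hsub (h.ellSet_approx_anti n.le_succ B C hD)).1, hD.2⟩
  obtain ⟨B, hB, hBP⟩ :=
    h.exists_forall_extension hmono (h.exists_subset_or_rejects_succ hp X) hA
  by_cases hr : Rejects le r X a B
  swap
  · simp only [Rejects, not_forall, not_not] at hr
    obtain ⟨C, hC, hCX⟩ := hr
    exact ⟨C, h.ellSet_mono hB.1 hC, Or.inl hCX⟩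
  obtain ⟨n, rfl⟩ := hB.2
  have hrej : ∀ m ≥ n, ∀ C ∈ EllSet le r (r n B) B, Rejects le r X (r m C) B := by
    intro m hm C hC
    have hCn := (h.mem_ellSet_iff.1 hC).2
    induction m, hm using Nat.le_induction with
    | base => rwa [hCn]
    | succ m hm ih =>
      have hCm : C ∈ EllSet le r (r m C) B := ⟨hC.1, m, rfl⟩
      rcases hBP C hC n m hCn hm with hacc | hrej
      · exact absurd ((h.ellSet_mono hC.1).trans hacc) (ih C hCm)
      · exact hrej C hCm m rfl
  refine ⟨B, hB, Or.inr (Set.eq_empty_iff_forall_notMem.2 ?_)⟩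
  rintro C ⟨hC, hCX⟩
  obtain ⟨m, hm⟩ := h.exists_ellSet_subset_of_isOpen hX hCX
  exact hrej (max m n) (le_max_right m n) C hC C ⟨hC.1, _, rfl⟩
    ((h.ellSet_approx_anti (le_max_left m n) C C).trans hm)

theorem isRamseyNullSet_union {S T : Set R} (hS : IsRamseyNullSet le r S)
    (hT : IsRamseyNullSet le r T) : IsRamseyNullSet le r (S ∪ T) := by
  intro a A hA
  obtain ⟨B, hB, hBS⟩ := hS a A hA
  obtain ⟨C, hC, hCT⟩ := hT a B ⟨B, h.le_refl B, hB.2⟩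
  refine ⟨C, h.ellSet_mono hB.1 hC, ?_⟩
  rw [Set.inter_union_distrib_left, hCT, Set.union_empty, ← Set.subset_empty_iff, ← hBS]
  exact Set.inter_subset_inter_left S (h.ellSet_mono hC.1)

theorem isRamseyNullSet_accumulate {S : ℕ → Set R} (hS : ∀ k, IsRamseyNullSet le r (S k))
    (n : ℕ) : IsRamseyNullSet le r (Set.accumulate S n) := by
  induction n with
  | zero => simpa [Set.accumulate] using hS 0
  | succ n ih =>
    rw [Set.accumulate_succ]
    exact h.isRamseyNullSet_union ih (hS (n + 1))

theorem isRamseyNullSet_iUnion {S : ℕ → Set R} (hS : ∀ k, IsRamseyNullSet le r (S k)) :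
    IsRamseyNullSet le r (⋃ k, S k) := by
  intro a A hA
  let P (a : α) (A : R) : Prop :=
    ∀ n C, r n C = a → EllSet le r a A ∩ Set.accumulate S n = ∅
  have hmono : ∀ {a A B}, EllSet le r a B ⊆ EllSet le r a A → P a A → P a B := by
    intro a A B hsub hA n C hn
    rw [← Set.subset_empty_iff, ← hA n C hn]
    exact Set.inter_subset_inter_left _ hsub
  have hdense : ∀ {a A}, (EllSet le r a A).Nonempty → ∃ B ∈ EllSet le r a A, P a B := by
    rintro a A ⟨C, hCA, n, rfl⟩
    obtain ⟨B, hB, hBS⟩ := h.isRamseyNullSet_accumulate hS n (r n C) A ⟨C, hCA, n, rfl⟩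
    refine ⟨B, hB, fun m D hm => ?_⟩
    obtain rfl := h.index_eq hm
    exact hBS
  obtain ⟨B, hB, hBP⟩ := h.exists_forall_extension hmono hdense hA
  refine ⟨B, hB, Set.eq_empty_iff_forall_notMem.2 ?_⟩
  rintro C ⟨hC, hCS⟩
  obtain ⟨k, hk⟩ := Set.mem_iUnion.1 hCS
  obtain ⟨m, hm⟩ := hC.2
  have hempty := hBP C hC m (max m k) hm (le_max_left m k) _ C rfl
  exact hempty.subset ⟨⟨hC.1, _, rfl⟩, Set.mem_biUnion (le_max_right m k) hk⟩

theorem isRamseyNullSet_of_isNowhereDense (hp : HasPigeonhole le r) {S : Set R}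
    (hS : @IsNowhereDense R (EllTop le r) S) : IsRamseyNullSet le r S := by
  let _ := EllTop le r
  intro a A hA
  obtain ⟨B, hB, hBS | hBS⟩ := h.isRamseySet_of_isOpen hp isClosed_closure.isOpen_compl a A hA
  · refine ⟨B, hB, Set.disjoint_iff_inter_eq_empty.1 ?_⟩
    exact (Set.subset_compl_iff_disjoint_right.1 hBS).mono_right subset_closure
  · have hopen : IsOpen (EllSet le r a B) := .basic _ ⟨a, B, rfl⟩
    have hint : EllSet le r a B ⊆ interior (closure S) := interior_maximal
      (Set.disjoint_compl_right_iff_subset.1 (Set.disjoint_iff_inter_eq_empty.2 hBS)) hopen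
    rw [show interior (closure S) = ∅ from hS] at hint
    exact absurd (hint ⟨h.le_refl B, hB.2⟩) (Set.notMem_empty B)

theorem isRamseyNullSet_of_isMeagre (hp : HasPigeonhole le r) {S : Set R}
    (hS : @IsMeagre R (EllTop le r) S) : IsRamseyNullSet le r S := by
  let _ := EllTop le r
  obtain ⟨𝒩, hnd, hcount, hsub⟩ := isMeagre_iff_countable_union_isNowhereDense.1 hS
  obtain ⟨T, hT⟩ := (hcount.insert ∅).exists_eq_range (Set.insert_nonempty _ _)
  have hTnd : ∀ k, IsNowhereDense (T k) := fun k => by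
    obtain hk | hk := hT.symm.subset (Set.mem_range_self k)
    · exact hk ▸ isNowhereDense_empty
    · exact hnd _ hk
  have hST : S ⊆ ⋃ k, T k := by
    rw [← Set.sUnion_range, ← hT]
    exact hsub.trans (Set.sUnion_subset_sUnion (Set.subset_insert _ _))
  intro a A hA
  obtain ⟨B, hB, hBT⟩ := h.isRamseyNullSet_iUnion
    (fun k => h.isRamseyNullSet_of_isNowhereDense hp (hTnd k)) a A hA
  exact ⟨B, hB, Set.subset_empty_iff.1 (hBT ▸ Set.inter_subset_inter_right _ hST)⟩

/-- **Abstract Ellentuck theorem.** -/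
theorem isTopRamseySpace (hp : HasPigeonhole le r) : IsTopRamseySpace le r := by
  refine ⟨?_, fun S hS => h.isRamseyNullSet_of_isMeagre hp hS⟩
  rintro S ⟨U, M, hU, hM, rfl⟩ a A hA
  obtain ⟨B, hB, hBM⟩ := h.isRamseyNullSet_of_isMeagre hp hM a A hA
  obtain ⟨C, hC, hCU⟩ := h.isRamseySet_of_isOpen hp hU a B ⟨B, h.le_refl B, hB.2⟩
  have hCM : ∀ D ∈ EllSet le r a C, D ∉ M := fun D hD hDM =>
    Set.eq_empty_iff_forall_notMem.1 hBM D ⟨h.ellSet_mono hC.1 hD, hDM⟩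
  refine ⟨C, h.ellSet_mono hB.1 hC, hCU.imp (fun hsub D hD => Or.inl ⟨hsub hD, hCM D hD⟩) ?_⟩
  refine fun hdisj => Set.eq_empty_iff_forall_notMem.2 ?_
  rintro D ⟨hD, hDU | hDM⟩
  · exact Set.eq_empty_iff_forall_notMem.1 hdisj D ⟨hD, hDU.1⟩
  · exact hCM D hD hDM.1

end IsApproximationSpace

end AbstractEllentuck

section AscendingWords

/-- Membership of `A` in `S_t^<(ω;ω)` in a concise form (`mem_StLt_iff`): `A` is a surjection fixing
the letters below `t`, and the classes of the other letters are finite, successive blocks. -/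
structure IsAscendingWord (t : ℕ) (A : ℕ → ℕ) : Prop where
  fix : ∀ i < t, A i = i
  surj : Function.Surjective A
  asc : ∀ {i j}, t ≤ A i → A i < A j → i < j

namespace IsAscendingWord

variable {t : ℕ} {A B : ℕ → ℕ}

theorem le_self (hA : IsAscendingWord t A) (i : ℕ) : A i ≤ i := by
  suffices ∀ v i, A i = v → v ≤ i from this _ i rfl
  intro v
  induction v with
  | zero => exact fun i _ => i.zero_le
  | succ v ih =>
    intro i hi
    obtain hv | hv := le_or_gt t v
    · obtain ⟨j, rfl⟩ := hA.surj v
      exact (ih j rfl).trans_lt (hA.asc hv (by omega))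
    · by_contra! hlt
      have := hA.fix i (by omega)
      omega

theorem comp (hA : IsAscendingWord t A) (hB : IsAscendingWord t B) : IsAscendingWord t (B ∘ A) where
  fix i hi := by rw [Function.comp_apply, hA.fix i hi, hB.fix i hi]
  surj := hB.surj.comp hA.surj
  asc h hlt := hA.asc (h.trans (hB.le_self _)) (hB.asc h hlt)

theorem apply_eq_of_lt (hA : IsAscendingWord t A) (hB : IsAscendingWord t B)
    (hAB : A.FactorsThrough B) {j : ℕ} (hj : B j < t) : A j = B j :=
  (hAB (hB.fix _ hj).symm).trans (hA.fix _ hj)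

theorem exists_lt_of_lt (hA : IsAscendingWord t A) {k L : ℕ} (hk : k < A L) :
    ∃ i < L, A i = k := by
  obtain ht | ht := le_or_gt t k
  · obtain ⟨i, rfl⟩ := hA.surj k
    exact ⟨i, hA.asc ht hk, rfl⟩
  · exact ⟨k, hk.trans_le (hA.le_self L), hA.fix k ht⟩

end IsAscendingWord

theorem mem_StLt_iff {t : ℕ} {A : ℕ → ℕ} : A ∈ StLt t ↔ IsAscendingWord t A := by
  constructor
  · rintro ⟨⟨hsurj, hfix, -⟩, -, hasc⟩
    refine ⟨hfix, hsurj, fun {i j} hi hij => ?_⟩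
    exact hasc (A i - t) (A j - t) (by omega) i j (by omega) (by omega)
  intro hA
  refine ⟨⟨hA.surj, hA.fix, fun j j' hjj' => ?_⟩, fun j => ?_, ?_⟩
  · obtain ht | ht := le_or_gt t j
    · obtain ⟨i, rfl⟩ := hA.surj j
      exact ⟨i, rfl, fun i' hi' => hA.asc ht (hi' ▸ hjj')⟩
    · exact ⟨j, hA.fix j ht, fun i' hi' => hjj'.trans_le (hi' ▸ hA.le_self i')⟩
  · obtain ⟨b, hb⟩ := hA.surj (t + j + 1)
    exact (Set.finite_Iio b).subset fun i (hi : A i = t + j) => hA.asc (by omega) (by omega)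
  · exact fun j j' hjj' i i' hi hi' => hA.asc (by omega) (by omega)

namespace IsAscendingWord

variable {t : ℕ} {A B : ℕ → ℕ}

theorem exists_eq_compP_iff (hA : IsAscendingWord t A) (hB : IsAscendingWord t B) :
    (∃ C ∈ StLt t, A = compP B C) ↔ A.FactorsThrough B := by
  constructor
  · rintro ⟨C, -, rfl⟩ i j hij
    exact congrArg C hij
  intro hAB
  let C := A ∘ Function.surjInv hB.surj
  have hC : ∀ i, C (B i) = A i := fun i => hAB (Function.surjInv_eq hB.surj (B i))
  refine ⟨C, mem_StLt_iff.2 ⟨fun i hi => ?_, fun k => ?_, fun {x y} hx hxy => ?_⟩,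
    funext fun i => (hC i).symm⟩
  · rw [← hB.fix i hi, hC, hA.fix i hi, hB.fix i hi]
  · obtain ⟨i, rfl⟩ := hA.surj k
    exact ⟨B i, hC i⟩
  · obtain ⟨i, rfl⟩ := hB.surj x
    obtain ⟨j, rfl⟩ := hB.surj y
    rw [hC] at hx
    rw [hC, hC] at hxy
    by_contra! hle
    have hne : B j ≠ B i := fun heq => hxy.ne' (hAB heq)
    obtain ht | ht := le_or_gt t (B j)
    · exact (hA.asc hx hxy).not_gt (hB.asc ht (by omega))
    · have := hA.apply_eq_of_lt hB hAB ht
      omega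

theorem le_of_factorsThrough (hA : IsAscendingWord t A) (hB : IsAscendingWord t B)
    (hAB : A.FactorsThrough B) (i : ℕ) : A i ≤ B i := by
  obtain ⟨C, hC, rfl⟩ := (hA.exists_eq_compP_iff hB).2 hAB
  exact (mem_StLt_iff.1 hC).le_self (B i)

end IsAscendingWord

/-- `L` is the position of a record value of `A`; for an ascending word this means that `A L` is
the first occurrence of a letter. Approximations of ascending words end just before a record. -/
def IsRecord (A : ℕ → ℕ) (L : ℕ) : Prop := ∀ i < L, A i < A L

theorem IsRecord.isLeast {A : ℕ → ℕ} {L : ℕ} (hL : IsRecord A L) :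
    IsLeast {i | A i = A L} L :=
  ⟨rfl, fun i (hi : A i = A L) => not_lt.1 fun hlt => (hL i hlt).ne hi⟩

theorem IsRecord.congr {A B : ℕ → ℕ} {L : ℕ} (hA : IsRecord A L) (h : ∀ i ≤ L, A i = B i) :
    IsRecord B L := fun i hi => by
  rw [← h i hi.le, ← h L le_rfl]
  exact hA i hi

namespace IsAscendingWord

variable {t L : ℕ} {A B : ℕ → ℕ}

theorem isRecord_of_isLeast (hA : IsAscendingWord t A) {k : ℕ} (hL : IsLeast {i | A i = k} L) :
    IsRecord A L := by
  obtain ⟨rfl, hmin⟩ := hL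
  intro i hi
  by_contra! hle
  obtain heq | hlt := hle.eq_or_lt
  · exact hi.not_ge (hmin heq.symm)
  · obtain ⟨j, hj, hjL⟩ := hA.exists_lt_of_lt hlt
    exact (hj.trans hi).not_ge (hmin hjL)

theorem apply_eq_self_of_isRecord (hA : IsAscendingWord t A) (hL : IsRecord A L) (ht : A L < t) :
    A L = L :=
  (hA.le_self L).antisymm (hL.isLeast.2 (hA.fix _ ht))

theorem lt_of_apply_lt (hA : IsAscendingWord t A) {i j : ℕ} (hij : i ≤ j) (hlt : A j < A i) :
    A j < t := by
  by_contra! ht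
  exact (hA.asc ht hlt).not_ge hij

theorem isRecord_of_factorsThrough (hA : IsAscendingWord t A) (hB : IsAscendingWord t B)
    (hAB : A.FactorsThrough B) (hL : IsRecord A L) : IsRecord B L := by
  intro i hi
  have hne : B i ≠ B L := fun h => (hL i hi).ne (hAB h)
  by_contra! hle
  obtain ht | ht := le_or_gt t (B L)
  · exact (hB.asc ht (by omega)).not_gt hi
  · have heq := hA.apply_eq_of_lt hB hAB ht
    have := hA.apply_eq_self_of_isRecord hL (by omega)
    have := hB.le_self i
    omega

theorem apply_eq_of_isRecord (hA : IsAscendingWord t A) (hB : IsAscendingWord t B)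
    (h : ∀ i < L, A i = B i) (hAL : IsRecord A L) (hBL : IsRecord B L) : A L = B L := by
  obtain hlt | heq | hlt := lt_trichotomy (A L) (B L)
  · obtain ⟨i, hi, hiA⟩ := hB.exists_lt_of_lt hlt
    exact absurd ((h i hi).trans hiA) (hAL i hi).ne
  · exact heq
  · obtain ⟨i, hi, hiB⟩ := hA.exists_lt_of_lt hlt
    exact absurd ((h i hi).symm.trans hiB) (hBL i hi).ne

end IsAscendingWord

theorem length_rP_of_ne_zero {t n : ℕ} (hn : n ≠ 0) (A : ℕ → ℕ) :
    (rP t n A).length = sInf {i | A i = t + n} := by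
  rw [rP, if_neg hn, List.length_ofFn]

theorem getElem?_rP {t n i : ℕ} {A : ℕ → ℕ} (hi : i < (rP t n A).length) :
    (rP t n A)[i]? = some (A i) := by
  rw [List.getElem?_eq_getElem hi]
  unfold rP at hi ⊢
  split_ifs at hi ⊢ with hn
  · simp at hi
  · simp

theorem IsRecord.exists_length_rP_eq {t L : ℕ} {A : ℕ → ℕ} (hL : IsRecord A L)
    (ht : L = 0 ∨ t < A L) : ∃ n, (rP t n A).length = L := by
  obtain rfl | ht := ht
  · exact ⟨0, rfl⟩
  · refine ⟨A L - t, ?_⟩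
    rw [length_rP_of_ne_zero (by omega), Nat.add_sub_cancel' ht.le, hL.isLeast.csInf_eq]

namespace IsAscendingWord

variable {t m n : ℕ} {A B : ℕ → ℕ}

theorem isLeast_length_rP (hA : IsAscendingWord t A) (hn : n ≠ 0) :
    IsLeast {i | A i = t + n} (rP t n A).length := by
  rw [length_rP_of_ne_zero hn]
  exact isLeast_csInf (hA.surj _)

theorem isRecord_length_rP (hA : IsAscendingWord t A) (n : ℕ) :
    IsRecord A (rP t n A).length := by
  obtain rfl | hn := eq_or_ne n 0
  · exact fun i hi => absurd hi i.not_lt_zero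
  · exact hA.isRecord_of_isLeast (hA.isLeast_length_rP hn)

theorem strictMono_length_rP (hA : IsAscendingWord t A) :
    StrictMono fun n => (rP t n A).length := by
  intro m n hmn
  have hn : A (rP t n A).length = t + n := (hA.isLeast_length_rP (by omega)).1
  obtain rfl | hm := eq_or_ne m 0
  · have := hA.le_self (rP t n A).length
    exact (show 0 < (rP t n A).length by omega)
  · have : A (rP t m A).length = t + m := (hA.isLeast_length_rP hm).1
    exact hA.asc (i := (rP t m A).length) (j := (rP t n A).length) (by omega) (by omega)

theorem rP_eq_iff (hA : IsAscendingWord t A) (hB : IsAscendingWord t B) :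
    rP t m A = rP t n B ↔ m = n ∧ ∀ i ≤ (rP t n B).length, A i = B i := by
  constructor
  · intro h
    have hlt : ∀ i < (rP t n B).length, A i = B i := fun i hi => by
      rw [← Option.some_inj, ← getElem?_rP hi, ← h, getElem?_rP (h ▸ hi)]
    have heq : A (rP t n B).length = B (rP t n B).length :=
      hA.apply_eq_of_isRecord hB hlt (h ▸ hA.isRecord_length_rP m) (hB.isRecord_length_rP n)
    refine ⟨?_, fun i hi => hi.eq_or_lt.elim (fun h => h ▸ heq) (hlt i)⟩
    obtain rfl | hm := eq_or_ne m 0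
    · have : n ≤ (rP t n B).length := hB.strictMono_length_rP.le_apply
      exact (Nat.le_zero.1 (this.trans_eq (h ▸ rfl))).symm
    obtain rfl | hn := eq_or_ne n 0
    · have : m ≤ (rP t m A).length := hA.strictMono_length_rP.le_apply
      exact Nat.le_zero.1 (this.trans_eq (h ▸ rfl))
    rw [(hB.isLeast_length_rP hn).1, ← h, (hA.isLeast_length_rP hm).1] at heq
    exact Nat.add_left_cancel heq
  · rintro ⟨rfl, h⟩
    have hlen : (rP t m A).length = (rP t m B).length := by
      obtain rfl | hm := eq_or_ne m 0
      · rfl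
      have hL := ((hB.isRecord_length_rP m).congr fun i hi => (h i hi).symm).isLeast
      rw [h _ le_rfl, (hB.isLeast_length_rP hm).1] at hL
      exact (hA.isLeast_length_rP hm).unique hL
    refine List.ext_getElem? fun i => ?_
    obtain hi | hi := lt_or_ge i (rP t m B).length
    · rw [getElem?_rP hi, getElem?_rP (hlen ▸ hi), h i hi.le]
    · rw [List.getElem?_eq_none hi, List.getElem?_eq_none (hlen ▸ hi)]

end IsAscendingWord

theorem IsAscendingWord.rP_eq_of_le {t m n : ℕ} {A B : ℕ → ℕ} (hA : IsAscendingWord t A)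
    (hB : IsAscendingWord t B) (hmn : m ≤ n) (h : rP t n A = rP t n B) :
    rP t m A = rP t m B := by
  obtain ⟨-, h⟩ := (hA.rP_eq_iff hB).1 h
  have hlen : (rP t m B).length ≤ (rP t n B).length := hB.strictMono_length_rP.monotone hmn
  exact (hA.rP_eq_iff hB).2 ⟨rfl, fun i hi => h i (hi.trans hlen)⟩

/-- The word that agrees with `A` below the common record position `L` and continues as `B`, with
the letters of the blocks of `B` shifted so that the block starting at `L` gets the letter `A L`. -/
def splice (t L : ℕ) (A B : ℕ → ℕ) (i : ℕ) : ℕ :=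
  if i < L then A i else if B i < t then B i else B i - B L + A L

theorem splice_of_lt {t L i : ℕ} (hi : i < L) (A B : ℕ → ℕ) : splice t L A B i = A i :=
  if_pos hi

theorem splice_of_apply_lt {t L i : ℕ} {B : ℕ → ℕ} (hi : L ≤ i) (hB : B i < t) (A : ℕ → ℕ) :
    splice t L A B i = B i := by
  rw [splice, if_neg hi.not_gt, if_pos hB]

theorem splice_of_le_apply {t L i : ℕ} {B : ℕ → ℕ} (hi : L ≤ i) (hB : t ≤ B i) (A : ℕ → ℕ) :
    splice t L A B i = B i - B L + A L := by
  rw [splice, if_neg hi.not_gt, if_neg hB.not_gt]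

namespace IsAscendingWord

variable {t L : ℕ} {A B C D : ℕ → ℕ}

theorem splice_of_le (hA : IsAscendingWord t A) (hB : IsAscendingWord t B) (hBL : IsRecord B L)
    {i : ℕ} (hi : i ≤ L) : splice t L A B i = A i := by
  obtain hlt | rfl := hi.lt_or_eq
  · exact splice_of_lt hlt A B
  obtain ht | ht := lt_or_ge (B i) t
  · have := hB.apply_eq_self_of_isRecord hBL ht
    rw [splice_of_apply_lt le_rfl ht, this, hA.fix i (by omega)]
  · rw [splice_of_le_apply le_rfl ht, Nat.sub_self, zero_add]

theorem splice_apply_of_lt_base (hA : IsAscendingWord t A) (hB : IsAscendingWord t B) {i : ℕ}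
    (hi : i < t) : splice t L A B i = i := by
  obtain hiL | hiL := lt_or_ge i L
  · rw [splice_of_lt hiL, hA.fix i hi]
  · have := hB.fix i hi
    rw [splice_of_apply_lt hiL (by omega), this]

theorem splice_surjective (hA : IsAscendingWord t A) (hB : IsAscendingWord t B)
    (hBL : IsRecord B L) : Function.Surjective (splice t L A B) := by
  intro k
  obtain ht | ht := lt_or_ge k t
  · exact ⟨k, hA.splice_apply_of_lt_base hB ht⟩
  obtain hk | hk := lt_or_ge k (A L)
  · obtain ⟨i, hi, rfl⟩ := hA.exists_lt_of_lt hk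
    exact ⟨i, splice_of_lt hi A B⟩
  have hAB : B L < t → A L = B L := fun hlt => by
    have := hB.apply_eq_self_of_isRecord hBL hlt
    rw [this, hA.fix L (by omega)]
  obtain ⟨i, hi⟩ := hB.surj (k - A L + B L)
  have hiL : L ≤ i := by
    by_contra! hlt
    have := hBL i hlt
    omega
  exact ⟨i, by rw [splice_of_le_apply hiL (by omega)]; omega⟩

protected theorem splice (hA : IsAscendingWord t A) (hB : IsAscendingWord t B)
    (hAL : IsRecord A L) (hBL : IsRecord B L) : IsAscendingWord t (splice t L A B) where
  fix _ hi := hA.splice_apply_of_lt_base hB hi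
  surj := hA.splice_surjective hB hBL
  asc {i j} hi hij := by
    by_contra! hji
    obtain hiL | hiL := lt_or_ge i L
    · rw [splice_of_lt hiL] at hi hij
      rw [splice_of_lt (hji.trans_lt hiL)] at hij
      exact (hA.asc hi hij).not_ge hji
    have hBi : t ≤ B i := by
      by_contra! hlt
      exact hlt.not_ge (splice_of_apply_lt hiL hlt A ▸ hi)
    rw [splice_of_le_apply hiL hBi] at hi hij
    obtain hjL | hjL := lt_or_ge j L
    · rw [splice_of_lt hjL] at hij
      have := hAL j hjL
      omega
    · by_cases hBj : B j < t
      · rw [splice_of_apply_lt hjL hBj] at hij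
        have := hB.lt_of_apply_lt hiL
        omega
      · rw [splice_of_le_apply hjL (by omega)] at hij
        exact (hB.asc hBi (by omega)).not_ge hji

theorem splice_factorsThrough (hA : IsAscendingWord t A) (hB : IsAscendingWord t B)
    (hD : IsAscendingWord t D) (hDL : IsRecord D L)
    (hAD : ∀ i < L, ∀ j < L, D i = D j → A i = A j) (hBD : B.FactorsThrough D) :
    (splice t L A B).FactorsThrough D := by
  have hcross : ∀ i < L, ∀ j ≥ L, D i = D j → splice t L A B i = splice t L A B j := by
    intro i hi j hj hij
    have ht : D j < t := hD.lt_of_apply_lt hj (hij ▸ hDL i hi)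
    have hDi : D i < t := hij ▸ ht
    have hBj := hB.apply_eq_of_lt hD hBD ht
    rw [splice_of_lt hi, splice_of_apply_lt hj (hBj ▸ ht), hBj, ← hij, ← hA.fix _ hDi]
    exact hAD i hi _ ((hD.le_self i).trans_lt hi) (hD.fix _ hDi).symm
  intro i j hij
  obtain hi | hi := lt_or_ge i L <;> obtain hj | hj := lt_or_ge j L
  · rw [splice_of_lt hi, splice_of_lt hj, hAD i hi j hj hij]
  · exact hcross i hi j hj hij
  · exact (hcross j hj i hi hij.symm).symm
  · simp only [splice, hi.not_gt, hj.not_gt, if_false, hBD hij]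

theorem factorsThrough_of_factorsThrough_splice (hA : IsAscendingWord t A)
    (hB : IsAscendingWord t B) (hC : IsAscendingWord t C) (hAL : IsRecord A L) (hBL : IsRecord B L)
    (hCB : ∀ i < L, C i = B i) (hCS : C.FactorsThrough (splice t L A B)) :
    C.FactorsThrough B := by
  have hcross : ∀ i < L, ∀ j ≥ L, B i = B j → C i = C j := by
    intro i hi j hj hij
    have ht : B j < t := hB.lt_of_apply_lt hj (hij ▸ hBL i hi)
    have hS := splice_of_apply_lt hj ht A
    rw [hCB i hi, hij, hC.apply_eq_of_lt (hA.splice hB hAL hBL) hCS (hS ▸ ht), hS]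
  intro i j hij
  obtain hi | hi := lt_or_ge i L <;> obtain hj | hj := lt_or_ge j L
  · rw [hCB i hi, hCB j hj, hij]
  · exact hcross i hi j hj hij
  · exact (hcross j hj i hi hij.symm).symm
  · exact hCS (by simp only [splice, hi.not_gt, hj.not_gt, if_false, hij])

end IsAscendingWord

/-- The order `A ≤ B` of `S_t^<(ω;ω)`. -/
def WordLE (t : ℕ) (A B : StLt t) : Prop := ∃ C ∈ StLt t, A.val = compP B.val C

/-- The finitization of `WordLE`: `a` and `b` are words of the same length, `a` is an approximation
of an ascending word, and the letters of `a` depend on those of `b` only. -/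
def ApproxLE (t : ℕ) (a b : List ℕ) : Prop :=
  a.length = b.length ∧ (∃ n, ∃ A ∈ StLt t, rP t n A = a) ∧
    ∀ i j : ℕ, b[i]? = b[j]? → a[i]? = a[j]?

variable {t m n : ℕ} {A B : ℕ → ℕ}

theorem isAscendingWord_val (A : StLt t) : IsAscendingWord t A.val :=
  mem_StLt_iff.1 A.prop

theorem wordLE_iff {A B : StLt t} : WordLE t A B ↔ A.val.FactorsThrough B.val :=
  (isAscendingWord_val A).exists_eq_compP_iff (isAscendingWord_val B)

theorem WordLE.trans {A B C : StLt t} (hAB : WordLE t A B) (hBC : WordLE t B C) : WordLE t A C :=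
  wordLE_iff.2 fun _ _ hC => wordLE_iff.1 hAB (wordLE_iff.1 hBC hC)

theorem finite_setOf_approxLE (t : ℕ) (b : List ℕ) : {a | ApproxLE t a b}.Finite := by
  refine (Set.finite_range fun f : Fin b.length → Fin b.length =>
    List.ofFn fun i => (f i).val).subset ?_
  rintro _ ⟨hlen, ⟨n, A, hA, rfl⟩, -⟩
  refine ⟨fun i => ⟨A i, ((mem_StLt_iff.1 hA).le_self i).trans_lt i.2⟩, ?_⟩
  refine List.ext_getElem (by rw [List.length_ofFn, hlen]) fun i _ hi => ?_
  rw [List.getElem_ofFn, ← Option.some_inj, ← List.getElem?_eq_getElem hi, getElem?_rP hi]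

theorem approxLE_rP_iff (hA : IsAscendingWord t A) :
    ApproxLE t (rP t n A) (rP t m B) ↔ (rP t n A).length = (rP t m B).length ∧
      ∀ i < (rP t n A).length, ∀ j < (rP t n A).length, B i = B j → A i = A j := by
  refine and_congr_right fun hlen => ⟨fun ⟨_, h⟩ i hi j hj hij => ?_,
    fun h => ⟨⟨n, A, mem_StLt_iff.2 hA, rfl⟩, fun i j hij => ?_⟩⟩
  · have := h i j (by rw [getElem?_rP (hlen ▸ hi), getElem?_rP (hlen ▸ hj), hij])
    rwa [getElem?_rP hi, getElem?_rP hj, Option.some_inj] at this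
  have hiff : i < (rP t m B).length ↔ j < (rP t m B).length := by
    rw [← not_iff_not, not_lt, not_lt, ← List.getElem?_eq_none_iff, hij, List.getElem?_eq_none_iff]
  rw [← hlen] at hiff
  by_cases hi : i < (rP t n A).length
  · have hj := hiff.1 hi
    rw [getElem?_rP (hlen ▸ hi), getElem?_rP (hlen ▸ hj), Option.some_inj] at hij
    rw [getElem?_rP hi, getElem?_rP hj, h i hi j hj hij]
  · rw [List.getElem?_eq_none (not_lt.1 hi), List.getElem?_eq_none (not_lt.1 (hi ∘ hiff.2))]

theorem exists_approxLE (hA : IsAscendingWord t A) (hB : IsAscendingWord t B)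
    (hAB : A.FactorsThrough B) (n : ℕ) : ∃ m, ApproxLE t (rP t n A) (rP t m B) := by
  have hBL := hA.isRecord_of_factorsThrough hB hAB (hA.isRecord_length_rP n)
  obtain ⟨m, hm⟩ := hBL.exists_length_rP_eq (t := t) <| by
    refine (eq_or_ne n 0).imp (fun h => by rw [h]; rfl) fun hn => ?_
    have h : A (rP t n A).length = t + n := (hA.isLeast_length_rP hn).1
    exact lt_of_lt_of_le (by omega) (hA.le_of_factorsThrough hB hAB _)
  exact ⟨m, (approxLE_rP_iff hA).2 ⟨hm.symm, fun _ _ _ _ h => hAB h⟩⟩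

theorem wordLE_iff_forall_exists_approxLE {A B : StLt t} :
    WordLE t A B ↔ ∀ n, ∃ m, ApproxLE t (rP t n A.val) (rP t m B.val) := by
  have hA := isAscendingWord_val A
  refine ⟨fun h => exists_approxLE hA (isAscendingWord_val B) (wordLE_iff.1 h),
    fun h => wordLE_iff.2 fun i j hij => ?_⟩
  obtain ⟨m, hm⟩ := h (max i j + 1)
  have hlen : max i j + 1 ≤ (rP t (max i j + 1) A.val).length := hA.strictMono_length_rP.le_apply
  exact ((approxLE_rP_iff hA).1 hm).2 i (by omega) j (by omega) hij

/-- Splicing `A` into `B` turns an inequality between approximations into one between words. -/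
theorem ApproxLE.exists_word (hA : IsAscendingWord t A) (hB : IsAscendingWord t B)
    (h : ApproxLE t (rP t n A) (rP t m B)) :
    ∃ C, IsAscendingWord t C ∧ C.FactorsThrough B ∧ rP t n C = rP t n A := by
  obtain ⟨hlen, hAB⟩ := (approxLE_rP_iff hA).1 h
  have hAL := hA.isRecord_length_rP n
  have hBL := hB.isRecord_length_rP m
  rw [← hlen] at hBL
  have hC := hA.splice hB hAL hBL
  exact ⟨_, hC, hA.splice_factorsThrough hB hB hBL hAB fun _ _ h => h,
    (hC.rP_eq_iff hA).2 ⟨rfl, fun i hi => hA.splice_of_le hB hBL hi⟩⟩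

theorem ApproxLE.exists_initial {k : ℕ} (hA : IsAscendingWord t A) (hB : IsAscendingWord t B)
    (hkn : k ≤ n) (h : ApproxLE t (rP t n A) (rP t m B)) :
    ∃ l ≤ m, ApproxLE t (rP t k A) (rP t l B) := by
  obtain ⟨C, hC, hCB, hCA⟩ := h.exists_word hA hB
  obtain ⟨-, hCA⟩ := (hC.rP_eq_iff hA).1 hCA
  obtain ⟨l, hl⟩ := exists_approxLE hC hB hCB k
  have hlen : (rP t k A).length ≤ (rP t n A).length := hA.strictMono_length_rP.monotone hkn
  rw [(hC.rP_eq_iff hA).2 ⟨rfl, fun i hi => hCA i (hi.trans hlen)⟩] at hl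
  rw [hl.1, h.1] at hlen
  exact ⟨l, hB.strictMono_length_rP.le_iff_le.1 hlen, hl⟩

theorem exists_amalgam_of_length_eq {C : ℕ → ℕ} (hB : IsAscendingWord t B)
    (hC : IsAscendingWord t C) (hCB : C.FactorsThrough B)
    (hlen : (rP t n C).length = (rP t m B).length) :
    ∃ A, IsAscendingWord t A ∧ A.FactorsThrough B ∧ rP t m A = rP t m B ∧
      ∀ E, IsAscendingWord t E → E.FactorsThrough A → rP t n E = rP t n C →
        E.FactorsThrough C := by
  have hCL := hC.isRecord_length_rP n
  have hBL := hB.isRecord_length_rP m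
  rw [hlen] at hCL
  have hA := hB.splice hC hBL hCL
  refine ⟨_, hA, hB.splice_factorsThrough hC hB hBL (fun _ _ _ _ h => h) hCB,
    (hA.rP_eq_iff hB).2 ⟨rfl, fun i hi => hB.splice_of_le hC hCL hi⟩, fun E hE hEA hEC => ?_⟩
  obtain ⟨-, hEC⟩ := (hE.rP_eq_iff hC).1 hEC
  exact hB.factorsThrough_of_factorsThrough_splice hC hE hBL hCL
    (fun i hi => hEC i (hlen ▸ hi.le)) hEA

theorem isAscendingWord_of_forall_approx {A : ℕ → ℕ → ℕ} (hA : ∀ n, IsAscendingWord t (A n))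
    (hB : ∀ n, ∀ i ≤ (rP t n (A n)).length, B i = A n i) : IsAscendingWord t B := by
  have hle : ∀ n, n ≤ (rP t n (A n)).length := fun n => (hA n).strictMono_length_rP.le_apply
  refine ⟨fun i hi => ?_, fun k => ?_, fun {i j} hi hij => ?_⟩
  · rw [hB i i (hle i), (hA i).fix i hi]
  · have hL : (A (k + 1)) (rP t (k + 1) (A (k + 1))).length = t + (k + 1) :=
      ((hA (k + 1)).isLeast_length_rP k.succ_ne_zero).1
    obtain ⟨i, hi, hik⟩ := (hA (k + 1)).exists_lt_of_lt (hL ▸ (by omega : k < t + (k + 1)))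
    exact ⟨i, (hB (k + 1) i hi.le).trans hik⟩
  · have hn := hle (max i j)
    rw [hB (max i j) i (by omega)] at hi hij
    rw [hB (max i j) j (by omega)] at hij
    exact (hA _).asc hi hij

theorem exists_forall_rP_eq (A : ℕ → StLt t)
    (hA : ∀ n, rP t n (A (n + 1)).val = rP t n (A n).val) :
    ∃ B : StLt t, ∀ n, rP t n B.val = rP t n (A n).val := by
  have hw : ∀ n, IsAscendingWord t (A n).val := fun n => isAscendingWord_val (A n)
  have hle : ∀ n, n ≤ (rP t n (A n).val).length := fun n => (hw n).strictMono_length_rP.le_apply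
  have heq : ∀ {m n}, m ≤ n → rP t m (A n).val = rP t m (A m).val := fun {m n} hmn => by
    induction n, hmn using Nat.le_induction with
    | base => rfl
    | succ n hmn ih => exact ((hw _).rP_eq_of_le (hw _) hmn (hA n)).trans ih
  have hagree : ∀ {m n}, m ≤ n → ∀ i ≤ (rP t m (A m).val).length, (A n).val i = (A m).val i :=
    fun hmn => (((hw _).rP_eq_iff (hw _)).1 (heq hmn)).2
  let B i := (A i).val i
  have hB : ∀ n, ∀ i ≤ (rP t n (A n).val).length, B i = (A n).val i := fun n i hi => by
    obtain h | h := le_total n i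
    · exact hagree h i hi
    · exact (hagree h i (hle i)).symm
  have hBw := isAscendingWord_of_forall_approx hw hB
  exact ⟨⟨B, mem_StLt_iff.2 hBw⟩, fun n => (hBw.rP_eq_iff (hw n)).2 ⟨rfl, hB n⟩⟩

theorem isApproximationSpace_stLt (t : ℕ) :
    IsApproximationSpace (WordLE t) (ApproxLE t) fun n (A : StLt t) => rP t n A.val where
  le_refl A := wordLE_iff.2 fun _ _ h => h
  le_trans := WordLE.trans
  index_eq {m n A B} h := (((isAscendingWord_val A).rP_eq_iff (isAscendingWord_val B)).1 h).1
  approx_eq_of_le := (isAscendingWord_val _).rP_eq_of_le (isAscendingWord_val _)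
  finite_leFin := finite_setOf_approxLE t
  le_iff := wordLE_iff_forall_exists_approxLE
  leFin_initial := ApproxLE.exists_initial (isAscendingWord_val _) (isAscendingWord_val _)
  nonempty_of_depth {a A B d} hd hA := by
    obtain ⟨-, k, hk : rP t k A.val = rP t d B.val⟩ := hA
    obtain ⟨n, A₀, hA₀, rfl⟩ := hd.1.2.1
    have h : ApproxLE t (rP t n A₀) (rP t k A.val) := by rw [hk]; exact hd.1
    obtain ⟨C, hC, hCA, hCn⟩ := h.exists_word (mem_StLt_iff.1 hA₀) (isAscendingWord_val A)
    exact ⟨⟨C, mem_StLt_iff.2 hC⟩, wordLE_iff.2 hCA, n, hCn⟩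
  exists_amalgam {a A B d} hd hAB hne := by
    obtain ⟨C, hCA, n, rfl⟩ := hne
    obtain ⟨A', hA', hA'B, hA'd, hext⟩ := exists_amalgam_of_length_eq (isAscendingWord_val B)
      (isAscendingWord_val C) (wordLE_iff.1 (hCA.trans hAB)) hd.1.1
    refine ⟨⟨A', mem_StLt_iff.2 hA'⟩, ⟨wordLE_iff.2 hA'B, d, hA'd⟩, fun E ⟨hEA', k, hE⟩ => ?_⟩
    have hEw := isAscendingWord_val E
    obtain rfl := ((hEw.rP_eq_iff (isAscendingWord_val C)).1 hE).1
    exact ⟨(wordLE_iff.2 (hext _ hEw (wordLE_iff.1 hEA') hE)).trans hCA, k, hE⟩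
  exists_limit := exists_forall_rP_eq

end AscendingWords

section Hindman

open Filter

theorem exists_idempotent_ultrafilter_le {M : Type*} [Semigroup M] {f : Filter M} [f.NeBot]
    (hf : ∀ s ∈ f, ∀ᶠ x in f, ∀ᶠ y in f, x * y ∈ s) :
    ∃ U : Ultrafilter M, ↑U ≤ f ∧
      ∀ p : M → Prop, (∀ᶠ x in U, p x) → ∀ᶠ x in U, ∀ᶠ y in U, p (x * y) := by
  let _ := Ultrafilter.semigroup (M := M)
  let S : Set (Ultrafilter M) := {U | ↑U ≤ f}
  have hcompact : IsCompact S := by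
    have hS : S = ⋂ s ∈ f, {U | s ∈ U} := by
      ext U
      simp only [S, Set.mem_iInter, Set.mem_ofPred_eq]
      rfl
    rw [hS]
    exact (isClosed_biInter fun s _ => ultrafilter_isClosed_basic s).isCompact
  have hmul : ∀ U ∈ S, ∀ V ∈ S, U * V ∈ S := fun U hU V hV s hs =>
    (Ultrafilter.eventually_mul U V (· ∈ s)).2 <|
      ((hf s hs).filter_mono hU).mono fun _ hx => hx.filter_mono hV
  obtain ⟨U, hU, hidem⟩ := exists_idempotent_in_compact_subsemigroup
    Ultrafilter.continuous_mul_left S ⟨Ultrafilter.of f, Ultrafilter.of_le f⟩ hcompact hmul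
  exact ⟨U, hU, fun p hp => (Ultrafilter.eventually_mul U U p).1 (hidem.symm ▸ hp)⟩

theorem exists_union_idempotent_ultrafilter : ∃ U : Ultrafilter (Finset ℕ),
    (∀ n, ∀ᶠ K : Finset ℕ in U, K.Nonempty ∧ ∀ x ∈ K, n ≤ x) ∧
      ∀ p : Finset ℕ → Prop, (∀ᶠ K in U, p K) → ∀ᶠ H in U, ∀ᶠ K in U, p (H ∪ K) := by
  let _ : Semigroup (Finset ℕ) := { mul := (· ∪ ·), mul_assoc := Finset.union_assoc }
  let S (n : ℕ) : Set (Finset ℕ) := {K | K.Nonempty ∧ ∀ x ∈ K, n ≤ x}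
  have hS : Antitone S := fun m n hmn K hK => ⟨hK.1, fun x hx => hmn.trans (hK.2 x hx)⟩
  have hbasis : (⨅ n, 𝓟 (S n)).HasBasis (fun _ => True) S := hasBasis_iInf_principal hS.directed_ge
  have : (⨅ n, 𝓟 (S n)).NeBot := hbasis.neBot_iff.2 fun {n} _ => ⟨{n}, by simp [S]⟩
  obtain ⟨U, hU, hidem⟩ := exists_idempotent_ultrafilter_le (f := ⨅ n, 𝓟 (S n)) fun s hs => by
    obtain ⟨n, -, hn⟩ := hbasis.mem_iff.1 hs
    have hSn := hbasis.mem_of_mem (i := n) trivial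
    filter_upwards [hSn] with H hH
    filter_upwards [hSn] with K hK
    refine hn ⟨hH.1.mono Finset.subset_union_left, fun x hx => ?_⟩
    exact (Finset.mem_union.1 hx).elim (hH.2 x) (hK.2 x)
  exact ⟨U, fun n => hU (hbasis.mem_of_mem trivial), hidem⟩

/-- A block sequence in the sense of Milliken: nonempty finite sets in increasing position. -/
structure IsBlockSeq (F : ℕ → Finset ℕ) : Prop where
  nonempty : ∀ m, (F m).Nonempty
  lt : ∀ {m n}, m < n → ∀ x ∈ F m, ∀ y ∈ F n, x < y

theorem exists_forall_eventually_union {U : Ultrafilter (Finset ℕ)}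
    (hidem : ∀ p : Finset ℕ → Prop, (∀ᶠ K in U, p K) → ∀ᶠ H in U, ∀ᶠ K in U, p (H ∪ K))
    {c : Finset ℕ → Finset ℕ → Prop} (hc : ∀ᶠ H in U, ∀ᶠ K in U, c H K) :
    ∃ s : Finset ℕ → Prop, (∀ᶠ K in U, s K) ∧
      ∀ H, s H → (∀ᶠ K in U, c H K) ∧ ∀ᶠ K in U, s (H ∪ K) := by
  let p (H : Finset ℕ) : Prop := ∀ᶠ K in U, c H K
  refine ⟨fun H => p H ∧ ∀ᶠ K in U, p (H ∪ K), hc.and (hidem p hc), fun H hH => ⟨hH.1, ?_⟩⟩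
  filter_upwards [hH.2, hidem (fun K => p (H ∪ K)) hH.2] with K hK hK'
  exact ⟨hK, by simpa only [Finset.union_assoc] using hK'⟩

theorem exists_forall_union_of_eventually_union {U : Filter (Finset ℕ)} [U.NeBot]
    (hU : ∀ n, ∀ᶠ K : Finset ℕ in U, K.Nonempty ∧ ∀ x ∈ K, n ≤ x) {s : Finset ℕ → Prop}
    {c : Finset ℕ → Finset ℕ → Prop} (hs : ∀ᶠ K in U, s K)
    (hsc : ∀ H, s H → (∀ᶠ K in U, c H K) ∧ ∀ᶠ K in U, s (H ∪ K)) (N : ℕ)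
    {T : Finset (Finset ℕ)} (hT : ∀ H ∈ T, s H) :
    ∃ K : Finset ℕ, (K.Nonempty ∧ ∀ x ∈ K, N ≤ x) ∧ s K ∧
      ∀ H ∈ T, c H K ∧ (∀ x ∈ H, ∀ y ∈ K, x < y) ∧ s (H ∪ K) := by
  have hlt (H : Finset ℕ) : ∀ᶠ K : Finset ℕ in U, ∀ x ∈ H, ∀ y ∈ K, x < y := by
    refine (hU (H.sup id + 1)).mono fun K hK x hx y hy => ?_
    exact (Nat.lt_succ_of_le (Finset.le_sup (f := id) hx)).trans_le (hK.2 y hy)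
  have hK : ∀ᶠ K in U, ∀ H ∈ T, c H K ∧ (∀ x ∈ H, ∀ y ∈ K, x < y) ∧ s (H ∪ K) :=
    (eventually_all_finset _).2 fun H hH =>
      (hsc H (hT H hH)).1.and ((hlt H).and (hsc H (hT H hH)).2)
  exact ((hU N).and (hs.and hK)).exists

theorem exists_isBlockSeq_of_eventually_union {U : Filter (Finset ℕ)} [U.NeBot]
    (hU : ∀ n, ∀ᶠ K : Finset ℕ in U, K.Nonempty ∧ ∀ x ∈ K, n ≤ x) {s : Finset ℕ → Prop}
    {c : Finset ℕ → Finset ℕ → Prop} (hs : ∀ᶠ K in U, s K)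
    (hsc : ∀ H, s H → (∀ᶠ K in U, c H K) ∧ ∀ᶠ K in U, s (H ∪ K)) (N : ℕ) :
    ∃ F, IsBlockSeq F ∧ (∀ m, ∀ x ∈ F m, N ≤ x) ∧
      ∀ n, ∀ I ⊆ Finset.range n, I.Nonempty → c (I.biUnion F) (F n) := by
  -- `a.2` collects the unions of sets chosen so far whose last member is `a.1`.
  let good (a : Finset ℕ × Finset (Finset ℕ)) : Prop :=
    (a.1.Nonempty ∧ ∀ x ∈ a.1, N ≤ x) ∧ a.1 ∈ a.2 ∧ ∀ H ∈ a.2, s H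
  let precedes (a b : Finset ℕ × Finset (Finset ℕ)) : Prop :=
    ∀ H ∈ a.2, c H b.1 ∧ (∀ x ∈ H, ∀ y ∈ b.1, x < y) ∧ H ∪ b.1 ∈ b.2
  obtain ⟨G, hG, hGp⟩ := exists_seq_of_forall_finset_exists good precedes fun T hT => by
    obtain ⟨K, hKN, hKs, hK⟩ := exists_forall_union_of_eventually_union hU hs hsc N
      (T := T.biUnion Prod.snd) fun H hH => by
        obtain ⟨a, ha, hHa⟩ := Finset.mem_biUnion.1 hH
        exact (hT a ha).2.2 H hHa
    refine ⟨⟨K, insert K ((T.biUnion Prod.snd).image (· ∪ K))⟩,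
      ⟨hKN, Finset.mem_insert_self _ _, ?_⟩, fun a ha H hHa => ?_⟩
    · rw [Finset.forall_mem_insert, Finset.forall_mem_image]
      exact ⟨hKs, fun H hH => (hK H hH).2.2⟩
    · have hH : H ∈ T.biUnion Prod.snd := Finset.mem_biUnion.2 ⟨a, ha, hHa⟩
      exact ⟨(hK H hH).1, (hK H hH).2.1,
        Finset.mem_insert_of_mem (Finset.mem_image_of_mem _ hH)⟩
  have hmem (I : Finset ℕ) : I.Nonempty → ∃ j ∈ I, I.biUnion (fun m => (G m).1) ∈ (G j).2 := by
    induction I using Finset.induction_on_max with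
    | empty => simp
    | insert j I hI ih =>
      refine fun _ => ⟨j, Finset.mem_insert_self j I, ?_⟩
      rw [Finset.biUnion_insert, Finset.union_comm]
      obtain rfl | hne := I.eq_empty_or_nonempty
      · simpa using (hG j).2.1
      · obtain ⟨i, hi, hiI⟩ := ih hne
        exact (hGp i j (hI i hi) _ hiI).2.2
  refine ⟨fun m => (G m).1, ⟨fun m => (hG m).1.1, fun {m n} hmn => ?_⟩, fun m => (hG m).1.2,
    fun n I hI hne => ?_⟩
  · exact (hGp m n hmn _ (hG m).2.1).2.1
  · obtain ⟨j, hj, hjI⟩ := hmem I hne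
    exact (hGp j n (Finset.mem_range.1 (hI hj)) _ hjI).1

theorem exists_isBlockSeq_monochromatic (c : Finset ℕ → Finset ℕ → Prop) (N : ℕ) :
    ∃ F, IsBlockSeq F ∧ (∀ m, ∀ x ∈ F m, N ≤ x) ∧
      ((∀ n, ∀ I ⊆ Finset.range n, I.Nonempty → c (I.biUnion F) (F n)) ∨
        ∀ n, ∀ I ⊆ Finset.range n, I.Nonempty → ¬c (I.biUnion F) (F n)) := by
  obtain ⟨U, hU, hidem⟩ := exists_union_idempotent_ultrafilter
  by_cases hc : ∀ᶠ H in U, ∀ᶠ K in U, c H K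
  · obtain ⟨s, hs, hsc⟩ := exists_forall_eventually_union hidem hc
    obtain ⟨F, hF, hN, hFc⟩ := exists_isBlockSeq_of_eventually_union hU hs hsc N
    exact ⟨F, hF, hN, Or.inl hFc⟩
  · simp only [← Ultrafilter.eventually_not] at hc
    obtain ⟨s, hs, hsc⟩ := exists_forall_eventually_union hidem hc
    obtain ⟨F, hF, hN, hFc⟩ := exists_isBlockSeq_of_eventually_union hU hs hsc N
    exact ⟨F, hF, hN, Or.inr hFc⟩

end Hindman

section Pigeonhole

/-- The word which is the identity up to `L`, maps `H` to the letter `n + 1` and is `0` elsewhere.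
Every `(n + 1)`-st approximation in a neighbourhood `[r_n(id), ·]` is an initial segment of such a
word, with `L` the last position on which `r_n(id)` decides the values of its extensions. -/
def blockWord (n L : ℕ) (H : Finset ℕ) (x : ℕ) : ℕ :=
  if x ≤ L then x else if x ∈ H then n + 1 else 0

/-- `σ` is the word which is the identity up to `L`, maps the block `F m` to the letter `n + 1 + m`
and is `0` elsewhere. -/
structure IsBlockMap (n L : ℕ) (F : ℕ → Finset ℕ) (σ : ℕ → ℕ) : Prop where
  apply_of_le : ∀ x ≤ L, σ x = x
  apply_of_mem : ∀ m, ∀ x ∈ F m, σ x = n + 1 + m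
  apply_of_notMem : ∀ x, L < x → (∀ m, x ∉ F m) → σ x = 0

theorem IsBlockSeq.exists_isBlockMap {F : ℕ → Finset ℕ} (hF : IsBlockSeq F) (n : ℕ) {L : ℕ}
    (hFL : ∀ m, ∀ x ∈ F m, L < x) : ∃ σ, IsBlockMap n L F σ := by
  classical
  have hinj : ∀ {m k x}, x ∈ F m → x ∈ F k → m = k := fun {m k x} hm hk => by
    by_contra! hne
    exact hne.lt_or_gt.elim (fun h => (hF.lt h x hm x hk).false) fun h => (hF.lt h x hk x hm).false
  refine ⟨fun x => if x ≤ L then x else if h : ∃ m, x ∈ F m then n + 1 + h.choose else 0,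
    fun x hx => if_pos hx, fun m x hx => ?_, fun x hx hxF => ?_⟩
  · have h : ∃ m, x ∈ F m := ⟨m, hx⟩
    simp only [(hFL m x hx).not_ge, if_false, dif_pos h, hinj h.choose_spec hx]
  · simp only [hx.not_ge, if_false, not_exists.2 hxF, dif_neg, not_false_eq_true]

theorem IsBlockMap.isAscendingWord {n L : ℕ} {F : ℕ → Finset ℕ} {σ : ℕ → ℕ}
    (hσ : IsBlockMap n L F σ) (hF : IsBlockSeq F) (hFL : ∀ m, ∀ x ∈ F m, L < x) (hnL : n ≤ L)
    (hLn : L ≤ n + 1) : IsAscendingWord 1 σ where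
  fix x hx := hσ.apply_of_le x (by omega)
  surj k := by
    obtain hk | hk := le_or_gt k n
    · exact ⟨k, hσ.apply_of_le k (hk.trans hnL)⟩
    · obtain ⟨x, hx⟩ := hF.nonempty (k - (n + 1))
      exact ⟨x, by rw [hσ.apply_of_mem _ x hx]; omega⟩
  asc {x y} hx hxy := by
    have hcases : ∀ z, 1 ≤ σ z → z ≤ L ∨ ∃ m, z ∈ F m := fun z hz => by
      by_contra! h
      have := hσ.apply_of_notMem z h.1 h.2
      omega
    obtain hxL | ⟨m, hm⟩ := hcases x hx <;> obtain hyL | ⟨k, hk⟩ := hcases y (by omega)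
    · rwa [hσ.apply_of_le x hxL, hσ.apply_of_le y hyL] at hxy
    · exact hxL.trans_lt (hFL k y hk)
    · rw [hσ.apply_of_mem m x hm, hσ.apply_of_le y hyL] at hxy
      omega
    · rw [hσ.apply_of_mem m x hm, hσ.apply_of_mem k y hk] at hxy
      exact hF.lt (by omega) x hm y hk

theorem IsBlockSeq.lt_of_lt_isLeast {F : ℕ → Finset ℕ} (hF : IsBlockSeq F) {j m x P : ℕ}
    (hP : IsLeast (F j : Set ℕ) P) (hxP : x < P) (hx : x ∈ F m) : m < j := by
  by_contra! hjm
  obtain rfl | hjm := hjm.eq_or_lt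
  · exact hxP.not_ge (hP.2 hx)
  · exact hxP.asymm (hF.lt hjm P hP.1 x hx)

section BlockMap

variable {n L P : ℕ} {F : ℕ → Finset ℕ} {σ ρ : ℕ → ℕ}

theorem IsBlockMap.apply_eq_apply (hσ : IsBlockMap n L F σ) (hρσ : ρ.FactorsThrough σ)
    {m x y : ℕ} (hx : x ∈ F m) (hy : y ∈ F m) : ρ x = ρ y :=
  hρσ ((hσ.apply_of_mem m x hx).trans (hσ.apply_of_mem m y hy).symm)

theorem IsBlockMap.exists_isLeast_block (hσ : IsBlockMap n L F σ) (hσw : IsAscendingWord 1 σ)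
    (hLn : L ≤ n + 1) (hρ : IsAscendingWord 1 ρ) (hρσ : ρ.FactorsThrough σ)
    (hP : IsLeast {x | ρ x = n + 2} P) : ∃ j > 0, IsLeast (F j : Set ℕ) P := by
  have hρP : ρ P = n + 2 := hP.1
  have hσP := hρ.le_of_factorsThrough hσw hρσ P
  have hLP : L < P := hLn.trans_lt (by have := hρ.le_self P; omega)
  obtain ⟨j, hj⟩ : ∃ j, P ∈ F j := by
    by_contra! hPF
    have := hσ.apply_of_notMem P hLP hPF
    omega
  have := hσ.apply_of_mem j P hj
  exact ⟨j, by omega, hj, fun x hx => hP.2 ((hσ.apply_eq_apply hρσ hx hj).trans hρP)⟩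

theorem IsAscendingWord.apply_eq_zero_or_eq (hρ : IsAscendingWord 1 ρ)
    (hL : L = n + 1 ∨ L = 0 ∧ n = 0) (hρL : ∀ x ≤ L, ρ x = x) {x : ℕ} (hx : L < x)
    (hxn : ρ x < n + 2) : ρ x = 0 ∨ ρ x = n + 1 := by
  by_contra! hne
  have hLL := hρL L le_rfl
  exact hx.not_gt (hρ.asc (i := x) (j := L) (by omega) (by omega))

theorem IsBlockMap.apply_eq_blockWord (hσ : IsBlockMap n L F σ) (hρ : IsAscendingWord 1 ρ)
    (hρσ : ρ.FactorsThrough σ) (hL : L = n + 1 ∨ L = 0 ∧ n = 0) (hρL : ∀ x ≤ L, ρ x = x)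
    {x : ℕ} (hxn : ρ x < n + 2) {I : Finset ℕ} (hI : ∀ m, x ∈ F m → (m ∈ I ↔ ρ x = n + 1)) :
    ρ x = blockWord n L (I.biUnion F) x := by
  unfold blockWord
  obtain hx | hx := le_or_gt x L
  · rw [if_pos hx, hρL x hx]
  rw [if_neg hx.not_ge]
  split_ifs with hxI
  · obtain ⟨m, hm, hxm⟩ := Finset.mem_biUnion.1 hxI
    exact (hI m hxm).1 hm
  · refine (hρ.apply_eq_zero_or_eq hL hρL hx hxn).resolve_right fun hxρ => ?_
    have hxF : ∀ m, x ∉ F m := fun m hm => hxI (Finset.mem_biUnion.2 ⟨m, (hI m hm).2 hxρ, hm⟩)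
    have hσx : σ x = σ 0 := (hσ.apply_of_notMem x hx hxF).trans (hσ.apply_of_le 0 L.zero_le).symm
    have := hρσ hσx
    have := hρL 0 L.zero_le
    omega

theorem IsBlockMap.exists_eq_blockWord (hσ : IsBlockMap n L F σ) (hF : IsBlockSeq F)
    (hσw : IsAscendingWord 1 σ) (hL : L = n + 1 ∨ L = 0 ∧ n = 0) (hρ : IsAscendingWord 1 ρ)
    (hρσ : ρ.FactorsThrough σ) (hρL : ∀ x ≤ L, ρ x = x) (hP : IsLeast {x | ρ x = n + 2} P) :
    ∃ j, ∃ I ⊆ Finset.range j, I.Nonempty ∧ IsLeast (F j : Set ℕ) P ∧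
      ∀ x < P, ρ x = blockWord n L (I.biUnion F) x := by
  classical
  have hρP : ρ P = n + 2 := hP.1
  obtain ⟨j, hj, hjP⟩ := hσ.exists_isLeast_block hσw (by omega) hρ hρσ hP
  let I := {m ∈ Finset.range j | ∀ x ∈ F m, ρ x = n + 1}
  have hmem {m x : ℕ} (hmj : m < j) (hx : x ∈ F m) (hρx : ρ x = n + 1) : m ∈ I :=
    Finset.mem_filter.2 ⟨Finset.mem_range.2 hmj,
      fun y hy => (hσ.apply_eq_apply hρσ hy hx).trans hρx⟩
  refine ⟨j, I, Finset.filter_subset _ _, ?_, hjP, fun x hxP => ?_⟩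
  · obtain ⟨x, hxP, hx⟩ := hρ.exists_lt_of_lt (k := n + 1) (L := P) (by omega)
    obtain hxL | hLx := le_or_gt x L
    -- The letter `n + 1` is taken at `L`, and the first block has the same value as `L` under `σ`.
    · obtain ⟨y, hy⟩ := hF.nonempty 0
      have := hρL x hxL
      have hσy : σ y = σ x := by rw [hσ.apply_of_mem 0 y hy, hσ.apply_of_le x hxL]; omega
      exact ⟨0, hmem hj hy ((hρσ hσy).trans hx)⟩
    · obtain ⟨m, hm⟩ : ∃ m, x ∈ F m := by
        by_contra! hxF
        have := hσ.apply_of_notMem x hLx hxF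
        have := hρ.le_of_factorsThrough hσw hρσ x
        omega
      exact ⟨m, hmem (hF.lt_of_lt_isLeast hjP hxP hm) hm hx⟩
  · have hxn : ρ x < n + 2 := hρP ▸ hρ.isRecord_of_isLeast hP x hxP
    refine hσ.apply_eq_blockWord hρ hρσ hL hρL hxn fun m hm => ⟨fun hmI => ?_, fun hρx => ?_⟩
    · exact (Finset.mem_filter.1 hmI).2 x hm
    · exact hmem (hF.lt_of_lt_isLeast hjP hxP hm) hm hρx

end BlockMap

theorem IsAscendingWord.rP_comp_eq_map {t n P : ℕ} {D ρ τ : ℕ → ℕ} (hD : IsAscendingWord t D)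
    (hn : n ≠ 0) (hP : IsLeast {x | ρ x = t + n} P) (hρτ : ∀ x < P, ρ x = τ x) :
    rP t n (ρ ∘ D) = (List.range (sInf {i | D i = P})).map (τ ∘ D) := by
  have hQ : IsLeast {i | D i = P} (sInf {i | D i = P}) := isLeast_csInf (hD.surj P)
  have hlt : ∀ i < sInf {i | D i = P}, D i < P := fun i hi =>
    (hD.isRecord_of_isLeast hQ i hi).trans_eq hQ.1
  have hleast : IsLeast {i | (ρ ∘ D) i = t + n} (sInf {i | D i = P}) :=
    ⟨(congrArg ρ hQ.1).trans hP.1, fun i hi => not_lt.1 fun h => (hlt i h).not_ge (hP.2 hi)⟩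
  rw [rP, if_neg hn, hleast.csInf_eq, List.ofFn_eq_map, ← List.map_coe_finRange_eq_range,
    List.map_map]
  exact List.map_congr_left fun i _ => hρτ _ (hlt i i.2)

theorem exists_eq_comp_of_factorsThrough {t n : ℕ} {C D : StLt t} {σ : ℕ → ℕ}
    (hCσ : C.val.FactorsThrough (σ ∘ D.val)) (hCn : rP t n C.val = rP t n D.val) :
    ∃ ρ, IsAscendingWord t ρ ∧ C.val = ρ ∘ D.val ∧ ρ.FactorsThrough σ ∧
      ∀ x ≤ D.val (rP t n D.val).length, ρ x = x := by
  have hC := isAscendingWord_val C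
  have hD := isAscendingWord_val D
  obtain ⟨ρ, hρ, hCρ⟩ := (hC.exists_eq_compP_iff hD).2 fun i j hij => hCσ (congrArg σ hij)
  have hCρ : ∀ i, C.val i = ρ (D.val i) := congrFun hCρ
  refine ⟨ρ, mem_StLt_iff.1 hρ, funext hCρ, fun x y hxy => ?_, fun x hx => ?_⟩
  · obtain ⟨i, rfl⟩ := hD.surj x
    obtain ⟨j, rfl⟩ := hD.surj y
    rw [← hCρ, ← hCρ]
    exact hCσ hxy
  · obtain ⟨i, hi, rfl⟩ : ∃ i ≤ (rP t n D.val).length, D.val i = x := by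
      obtain rfl | hx := hx.eq_or_lt
      · exact ⟨_, le_rfl, rfl⟩
      · exact (hD.exists_lt_of_lt hx).imp fun i hi => ⟨hi.1.le, hi.2⟩
    rw [← hCρ]
    exact ((hC.rP_eq_iff hD).1 hCn).2 i hi

theorem IsBlockMap.exists_rP_succ_eq {n L : ℕ} {F : ℕ → Finset ℕ} {σ : ℕ → ℕ} {C D : StLt 1}
    (hσ : IsBlockMap n L F σ) (hF : IsBlockSeq F) (hσw : IsAscendingWord 1 σ)
    (hL : L = n + 1 ∨ L = 0 ∧ n = 0) (hDL : D.val (rP 1 n D.val).length = L)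
    (hCσ : C.val.FactorsThrough (σ ∘ D.val)) (hCn : rP 1 n C.val = rP 1 n D.val) :
    ∃ j, ∃ I ⊆ Finset.range j, I.Nonempty ∧ rP 1 (n + 1) C.val =
      (List.range (sInf {i | D.val i = sInf (F j)})).map (blockWord n L (I.biUnion F) ∘ D.val) := by
  have hD := isAscendingWord_val D
  obtain ⟨ρ, hρ, hCρ, hρσ, hρL⟩ := exists_eq_comp_of_factorsThrough hCσ hCn
  have hP : IsLeast {x | ρ x = n + 2} (sInf {x | ρ x = n + 2}) := isLeast_csInf (hρ.surj _)
  obtain ⟨j, I, hI, hne, hjP, hρI⟩ :=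
    hσ.exists_eq_blockWord hF hσw hL hρ hρσ (hDL ▸ hρL) hP
  refine ⟨j, I, hI, hne, ?_⟩
  rw [hCρ, hjP.csInf_eq]
  exact hD.rP_comp_eq_map n.succ_ne_zero (by rwa [add_comm 1]) hρI

theorem hasPigeonhole_stLt_one :
    HasPigeonhole (WordLE 1) fun n (A : StLt 1) => rP 1 n A.val := by
  intro n D O
  have hD := isAscendingWord_val D
  obtain ⟨L, hDL⟩ : ∃ L, D.val (rP 1 n D.val).length = L := ⟨_, rfl⟩
  have hL : L = n + 1 ∨ L = 0 ∧ n = 0 := by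
    obtain rfl | hn := eq_or_ne n 0
    · exact Or.inr ⟨hDL ▸ Nat.le_zero.1 (hD.le_self _), rfl⟩
    · exact Or.inl (hDL ▸ (hD.isLeast_length_rP hn).1.trans (add_comm 1 n))
  obtain ⟨F, hF, hFL, hFO⟩ := exists_isBlockSeq_monochromatic (fun H K =>
    (List.range (sInf {i | D.val i = sInf K})).map (blockWord n L H ∘ D.val) ∈ O) (L + 1)
  obtain ⟨σ, hσ⟩ := hF.exists_isBlockMap n hFL
  have hσw := hσ.isAscendingWord hF hFL (by omega) (by omega)
  have hB : IsAscendingWord 1 (σ ∘ D.val) := hD.comp hσw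
  have hBD : rP 1 n (σ ∘ D.val) = rP 1 n D.val := by
    refine (hB.rP_eq_iff hD).2 ⟨rfl, fun i hi => hσ.apply_of_le _ (hDL ▸ ?_)⟩
    exact hi.eq_or_lt.elim (fun h => h ▸ le_rfl) fun h => (hD.isRecord_length_rP n i h).le
  let B : StLt 1 := ⟨σ ∘ D.val, mem_StLt_iff.2 hB⟩
  refine ⟨B, ⟨wordLE_iff.2 fun i j hij => congrArg σ hij, n, hBD⟩,
    hFO.imp (fun hO C hC => ?_) fun hO C hC => ?_⟩
  all_goals
    obtain ⟨hCB, hCn⟩ := (isApproximationSpace_stLt 1).mem_ellSet_iff.1 hC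
    obtain ⟨j, I, hI, hne, hCI⟩ := hσ.exists_rP_succ_eq hF hσw hL hDL (wordLE_iff.1 hCB) hCn
    have hOI := hO j I hI hne
    rwa [← hCI] at hOI

end Pigeonhole

/-- **Theorem (Milliken).** `(S_1^<(ω;ω), ≤, r)` (Milliken's space) is a
topological Ramsey space, where `A ≤ B` iff `A = B·C` for some
`C ∈ S_1^<(ω;ω)`. -/
theorem milliken_is_topological_ramsey_space :
    IsTopRamseySpace
      (fun A B : ↥(StLt 1) => ∃ C ∈ StLt 1, A.val = compP B.val C)
      (fun n (A : ↥(StLt 1)) => rP 1 n A.val) :=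
  (isApproximationSpace_stLt 1).isTopRamseySpace hasPigeonhole_stLt_one
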